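/- Second topological-charge conservation law (vanishing density) for the potential Kawahara–KP equation: if v solves the potential Kawahara–KP equation and f : ℝ → ℝ is any smooth function, then ∂_x Φˣ + ∂_y Φʸ = 0 holds at every point of ℝ³, where Φˣ := y·(β·v_xxx + v_xxxxx + (1/2)·v_x² + v_t)·f(t) and Φʸ := σ·(v - y·v_y)·f(t). -/

import Mathlib

/-- Partial derivative in `t` of a function `v (t, x, y)` given in curried form. -/
noncomputable def pt (v : ℝ → ℝ → ℝ → ℝ) : ℝ → ℝ → ℝ → ℝ :=
  fun t x y => deriv (fun s => v s x y) t

/-- Partial derivative in `x` of a function `v (t, x, y)` given in curried form. -/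
noncomputable def px (v : ℝ → ℝ → ℝ → ℝ) : ℝ → ℝ → ℝ → ℝ :=
  fun t x y => deriv (fun s => v t s y) x

/-- Partial derivative in `y` of a function `v (t, x, y)` given in curried form. -/
noncomputable def py (v : ℝ → ℝ → ℝ → ℝ) : ℝ → ℝ → ℝ → ℝ :=
  fun t x y => deriv (fun s => v t x s) y

/-- The potential Kawahara–KP operator:
`v_tx + v_x·v_xx + β·v_xxxx + v_xxxxxx - σ·v_yy`. -/
noncomputable def KKP (β σ : ℝ) (v : ℝ → ℝ → ℝ → ℝ) : ℝ → ℝ → ℝ → ℝ :=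
  fun t x y =>
    px (pt v) t x y + px v t x y * px (px v) t x y
      + β * px (px (px (px v))) t x y
      + px (px (px (px (px (px v))))) t x y
      - σ * py (py v) t x y

/-- The linearization of the potential Kawahara–KP equation at `v`, applied to `p`:
`p_tx + v_xx·p_x + v_x·p_xx + β·p_xxxx + p_xxxxxx - σ·p_yy`. -/
noncomputable def KKPlin (β σ : ℝ) (v p : ℝ → ℝ → ℝ → ℝ) : ℝ → ℝ → ℝ → ℝ :=
  fun t x y =>
    px (pt p) t x y + px (px v) t x y * px p t x y + px v t x y * px (px p) t x y
      + β * px (px (px (px p))) t x y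
      + px (px (px (px (px (px p))))) t x y
      - σ * py (py p) t x y

/-!
The Kawahara–KP operator is itself a divergence, `∂_x F - σ·∂_y v_y` with
`F = β·v_xxx + v_xxxxx + v_x²/2 + v_t`. The multiplier `y·f(t)` does not depend on `x`, so it passes
through `∂_x`, while `∂_y (v - y·v_y) = -y·v_yy`. Hence the divergence of `(Φˣ, Φʸ)` is `y·f(t)`
times the operator, for every `v` and not only for solutions.
-/

open Function

section PartialDerivatives

variable {v : ℝ → ℝ → ℝ → ℝ} {m n : WithTop ℕ∞}

lemma contDiff_pt (hv : ContDiff ℝ n ↿v) (hmn : m + 1 ≤ n) : ContDiff ℝ m ↿(pt v) :=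
  ContDiff.fderiv_apply (f := fun (q : ℝ × ℝ × ℝ) s => v s q.2.1 q.2.2)
    (hv.comp (f := fun r : (ℝ × ℝ × ℝ) × ℝ => (r.2, r.1.2.1, r.1.2.2)) (by fun_prop))
    (by fun_prop) contDiff_const hmn

lemma contDiff_px (hv : ContDiff ℝ n ↿v) (hmn : m + 1 ≤ n) : ContDiff ℝ m ↿(px v) :=
  ContDiff.fderiv_apply (f := fun (q : ℝ × ℝ × ℝ) s => v q.1 s q.2.2)
    (hv.comp (f := fun r : (ℝ × ℝ × ℝ) × ℝ => (r.1.1, r.2, r.1.2.2)) (by fun_prop))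
    (by fun_prop) contDiff_const hmn

lemma contDiff_py (hv : ContDiff ℝ n ↿v) (hmn : m + 1 ≤ n) : ContDiff ℝ m ↿(py v) :=
  ContDiff.fderiv_apply (f := fun (q : ℝ × ℝ × ℝ) s => v q.1 q.2.1 s)
    (hv.comp (f := fun r : (ℝ × ℝ × ℝ) × ℝ => (r.1.1, r.1.2.1, r.2)) (by fun_prop))
    (by fun_prop) contDiff_const hmn

lemma contDiff_iterate_px (k : ℕ) (hv : ContDiff ℝ n ↿v) (hmn : m + k ≤ n) :
    ContDiff ℝ m ↿(px^[k] v) := by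
  induction k generalizing m with
  | zero => exact hv.of_le (by simpa using hmn)
  | succ k ih =>
    rw [iterate_succ_apply']
    refine contDiff_px (ih (m := m + 1) ?_) le_rfl
    rwa [add_assoc, add_comm 1, ← Nat.cast_add_one]

lemma hasDerivAt_px (hv : ContDiff ℝ n ↿v) (hn : n ≠ 0) (t x y : ℝ) :
    HasDerivAt (fun s => v t s y) (px v t x y) x :=
  ((hv.comp (f := fun s : ℝ => (t, s, y)) (by fun_prop)).differentiable hn x).hasDerivAt

lemma hasDerivAt_py (hv : ContDiff ℝ n ↿v) (hn : n ≠ 0) (t x y : ℝ) :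
    HasDerivAt (fun s => v t x s) (py v t x y) y :=
  ((hv.comp (f := fun s : ℝ => (t, x, s)) (by fun_prop)).differentiable hn y).hasDerivAt

lemma py_sub_mul_py (hv : ContDiff ℝ 2 ↿v) (t x y : ℝ) :
    py (fun t x y => v t x y - y * py v t x y) t x y = -(y * py (py v) t x y) := by
  have h_v := hasDerivAt_py hv two_ne_zero t x y
  have h_vy := hasDerivAt_py (contDiff_py (m := 1) hv (by norm_num)) one_ne_zero t x y
  calc py (fun t x y => v t x y - y * py v t x y) t x y
      = py v t x y - (1 * py v t x y + y * py (py v) t x y) :=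
        (h_v.sub ((hasDerivAt_id y).mul h_vy)).deriv
    _ = -(y * py (py v) t x y) := by ring

end PartialDerivatives

namespace KKP

/-- The `x`-flux `β·v_xxx + v_xxxxx + v_x²/2 + v_t` in the divergence form
`∂_x F - σ·∂_y v_y` of the potential Kawahara–KP operator. -/
noncomputable def xFlux (β : ℝ) (v : ℝ → ℝ → ℝ → ℝ) : ℝ → ℝ → ℝ → ℝ :=
  fun t x y =>
    β * px (px (px v)) t x y + px (px (px (px (px v)))) t x y
      + (1 / 2) * (px v t x y) ^ 2 + pt v t x y

variable {v : ℝ → ℝ → ℝ → ℝ}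

lemma px_xFlux (β : ℝ) (hv : ContDiff ℝ 6 ↿v) (t x y : ℝ) :
    px (xFlux β v) t x y =
      β * px (px (px (px v))) t x y + px (px (px (px (px (px v))))) t x y
        + px v t x y * px (px v) t x y + px (pt v) t x y := by
  have h_iter (k : ℕ) (hk : 1 + (k : WithTop ℕ∞) ≤ 6) :=
    hasDerivAt_px (contDiff_iterate_px k hv hk) one_ne_zero t x y
  have h_xxx := h_iter 3 (by norm_num)
  have h_xxxxx := h_iter 5 (by norm_num)
  have h_x := h_iter 1 (by norm_num)
  have h_t := hasDerivAt_px (contDiff_pt (m := 5) hv (by norm_num)) (by norm_num) t x y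
  refine ((((h_xxx.const_mul β).add h_xxxxx).add ((h_x.pow 2).const_mul (1 / 2))).add
    h_t).deriv.trans ?_
  simp only [iterate_succ_apply, iterate_zero_apply]
  push_cast
  ring

lemma eq_px_xFlux_sub (β σ : ℝ) (hv : ContDiff ℝ 6 ↿v) (t x y : ℝ) :
    KKP β σ v t x y = px (xFlux β v) t x y - σ * py (py v) t x y := by
  rw [px_xFlux β hv, KKP]
  ring

end KKP

theorem second_topological_charge_KKP_general (β σ : ℝ) {v : ℝ → ℝ → ℝ → ℝ}
    (hv : ContDiff ℝ 6 ↿v) (f : ℝ → ℝ) (t x y : ℝ) :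
    px (fun t x y => y * KKP.xFlux β v t x y * f t) t x y
        + py (fun t x y => σ * (v t x y - y * py v t x y) * f t) t x y
      = y * f t * KKP β σ v t x y := by
  have h_x : px (fun t x y => y * KKP.xFlux β v t x y * f t) t x y
      = y * px (KKP.xFlux β v) t x y * f t := by
    simp only [px, deriv_mul_const_field, deriv_const_mul_field]
  have h_y : py (fun t x y => σ * (v t x y - y * py v t x y) * f t) t x y
      = σ * -(y * py (py v) t x y) * f t := by
    rw [← py_sub_mul_py (hv.of_le (by norm_num)) t x y]
    exact (deriv_mul_const_field _).trans (congrArg (· * f t) (deriv_const_mul_field σ))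
  rw [h_x, h_y, KKP.eq_px_xFlux_sub β σ hv]
  ring

/-- Second topological-charge conservation law (vanishing density) for the
potential Kawahara–KP equation. -/
theorem second_topological_charge_KKP (β σ : ℝ) (hβ : β ≠ 0) (hσ : σ = 1 ∨ σ = -1)
    (v : ℝ → ℝ → ℝ → ℝ)
    (hv : ContDiff ℝ (⊤ : ℕ∞) (fun q : ℝ × ℝ × ℝ => v q.1 q.2.1 q.2.2))
    (hsol : ∀ t x y : ℝ, KKP β σ v t x y = 0)
    (f : ℝ → ℝ) (hf : ContDiff ℝ (⊤ : ℕ∞) f)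
    (Φx Φy : ℝ → ℝ → ℝ → ℝ)
    (hΦx : Φx = fun t x y =>
      y * (β * px (px (px v)) t x y + px (px (px (px (px v)))) t x y
        + (1 / 2) * (px v t x y) ^ 2 + pt v t x y) * f t)
    (hΦy : Φy = fun t x y => σ * (v t x y - y * py v t x y) * f t) :
    ∀ t x y : ℝ, px Φx t x y + py Φy t x y = 0 := by
  subst hΦx hΦy
  intro t x y
  exact (second_topological_charge_KKP_general β σ (contDiff_infty.mp hv 6) f t x y).trans
    (by rw [hsol, mul_zero])
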